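/- Let p ∈ (0,1) and let (f_n)_{n≥1} be a sequence of functions f_n : {0,1}^n → [0,1]. Then (f_n)_{n≥1} is noise sensitive at intensity p if and only if for every k ∈ ℕ, lim_{n→∞} Σ_{S ⊆ {1,…,n}, 0 < |S| ≤ k} f̂_n^p(S)² = 0. -/

import Mathlib

/-!
In one coordinate the joint mass of `(ω, ω^ε)` at `(a, b)` is `q(a) q(b) (1 + (1 - ε) χ(a) χ(b))`,
where `q` is the one-bit marginal. Multiplying out over the coordinates diagonalizes the noise in
the characters, so that the noise covariance is `∑_{S ≠ ∅} (1 - ε)^|S| f̂(S)²`; at `ε = 0` this is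
Parseval's identity for the variance. On levels `1, …, k` the multiplier `(1 - ε)^|S|` is at least
`(1 - ε)^k`, so vanishing noise covariance forces the low levels to vanish. Above level `k` it is
at most `(1 - ε)^k`, so those levels contribute at most `(1 - ε)^k Var f`, which is small uniformly
in `n` once `k` is large.
-/

open Finset Filter

namespace PartialObs

/-- Weight of a configuration `ω ∈ {0,1}^n` under the product measure `ℙ_p`. -/
noncomputable def w {n : ℕ} (p : ℝ) (ω : Fin n → Bool) : ℝ :=
  ∏ i, if ω i then p else 1 - p

/-- Expectation with respect to `ℙ_p`. -/
noncomputable def E {n : ℕ} (p : ℝ) (f : (Fin n → Bool) → ℝ) : ℝ :=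
  ∑ ω : Fin n → Bool, w p ω * f ω

/-- Variance with respect to `ℙ_p`. -/
noncomputable def Var {n : ℕ} (p : ℝ) (f : (Fin n → Bool) → ℝ) : ℝ :=
  E p (fun ω => (f ω - E p f) ^ 2)

/-- Coordinatewise product `ψ·ξ` of two configurations. -/
def prodCfg {n : ℕ} (ψ ξ : Fin n → Bool) : Fin n → Bool := fun i => ψ i && ξ i

/-- The conditional expectation `E_{p/r}[f(ψ·ξ) | ψ]`, as a function of `ψ`:
`ξ` is integrated out according to `ℙ_{p/r}`. -/
noncomputable def condExp {n : ℕ} (p r : ℝ) (f : (Fin n → Bool) → ℝ)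
    (ψ : Fin n → Bool) : ℝ :=
  E (p / r) (fun ξ => f (prodCfg ψ ξ))

/-- The character `χ_S^p(ω) = ∏_{i ∈ S} χ_i^p(ω)`, where `χ_i^p(ω) = -√((1-p)/p)`
if `ω_i = 1` and `√(p/(1-p))` if `ω_i = 0`. -/
noncomputable def chi {n : ℕ} (p : ℝ) (S : Finset (Fin n)) (ω : Fin n → Bool) : ℝ :=
  ∏ i ∈ S, if ω i then -Real.sqrt ((1 - p) / p) else Real.sqrt (p / (1 - p))

/-- The Fourier coefficient `f̂^p(S) = E_p[f · χ_S^p]`. -/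
noncomputable def fourier {n : ℕ} (p : ℝ) (f : (Fin n → Bool) → ℝ)
    (S : Finset (Fin n)) : ℝ :=
  E p (fun ω => f ω * chi p S ω)

/-- Joint probability mass of the pair `(ω, ω^ε)` at `(a, b)`, where `ω ∼ ℙ_p` and
`ω^ε` is obtained from `ω` by independently resampling each coordinate with
probability `ε` (the resampled value being `1` with probability `p`). -/
noncomputable def pairW {n : ℕ} (p ε : ℝ) (a b : Fin n → Bool) : ℝ :=
  ∏ i, (if a i then p else 1 - p) *
    ((1 - ε) * (if a i = b i then 1 else 0) + ε * (if b i then p else 1 - p))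

/-- Expectation `E_p[F(ω, ω^ε)]` over the joint law of `(ω, ω^ε)`. -/
noncomputable def E2 {n : ℕ} (p ε : ℝ)
    (F : (Fin n → Bool) → (Fin n → Bool) → ℝ) : ℝ :=
  ∑ a : Fin n → Bool, ∑ b : Fin n → Bool, pairW p ε a b * F a b

/-- The quantity `E_p[f(ω) f(ω^ε)] − E_p[f(ω)]²`. -/
noncomputable def noiseCov {n : ℕ} (p ε : ℝ) (f : (Fin n → Bool) → ℝ) : ℝ :=
  E2 p ε (fun a b => f a * f b) - (E p f) ^ 2

/-- Noise sensitivity at intensity `p`: for every `ε ∈ (0,1)`,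
`E_p[f_n(ω) f_n(ω^ε)] − E_p[f_n(ω)]² → 0` as `n → ∞`. -/
def NS (p : ℝ) (f : ∀ n, (Fin n → Bool) → ℝ) : Prop :=
  ∀ ε ∈ Set.Ioo (0 : ℝ) 1,
    Tendsto (fun n => noiseCov p ε (f n)) atTop (nhds 0)

noncomputable section

/-- The law of a single bit under `ℙ_p`, i.e. the one-coordinate factor of `w`. -/
def bitWeight (p : ℝ) (b : Bool) : ℝ :=
  if b then p else 1 - p

/-- The one-coordinate character `χ_i^p`, as a function of the bit `ω_i`. -/
def bitChar (p : ℝ) (b : Bool) : ℝ :=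
  if b then -√((1 - p) / p) else √(p / (1 - p))

/-- The Fourier mass of `f` on the levels `1, …, k`. The empty set, whose coefficient is the mean
of `f`, is left out. -/
def lowLevelMass {n : ℕ} (p : ℝ) (k : ℕ) (f : (Fin n → Bool) → ℝ) : ℝ :=
  ∑ S with S ≠ ∅ ∧ S.card ≤ k, fourier p f S ^ 2

end

section ProductMeasure

variable {n : ℕ} {p : ℝ}

theorem w_eq_prod_bitWeight (p : ℝ) (ω : Fin n → Bool) : w p ω = ∏ i, bitWeight p (ω i) := rfl

theorem w_nonneg (hp : p ∈ Set.Icc 0 1) (ω : Fin n → Bool) : 0 ≤ w p ω :=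
  prod_nonneg fun i _ => by
    split_ifs
    exacts [hp.1, sub_nonneg.2 hp.2]

theorem sum_w (n : ℕ) (p : ℝ) : ∑ ω : Fin n → Bool, w p ω = 1 :=
  calc ∑ ω : Fin n → Bool, w p ω = ∏ _i : Fin n, ∑ b, bitWeight p b := by
        simp only [prod_univ_sum, Fintype.piFinset_univ, w_eq_prod_bitWeight]
    _ = 1 := by simp [bitWeight]

theorem E_mem_of_convex (hp : p ∈ Set.Icc 0 1) {s : Set ℝ} (hs : Convex ℝ s)
    {f : (Fin n → Bool) → ℝ} (hf : ∀ ω, f ω ∈ s) : E p f ∈ s :=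
  hs.sum_mem (fun ω _ => w_nonneg hp ω) (sum_w n p) fun ω _ => hf ω

theorem Var_eq_E_sq_sub_sq_E (p : ℝ) (f : (Fin n → Bool) → ℝ) :
    Var p f = E p (fun ω => f ω ^ 2) - E p f ^ 2 := by
  have expand (m : ℝ) : E p (fun ω => (f ω - m) ^ 2) =
      E p (fun ω => f ω ^ 2) - 2 * m * E p f + m ^ 2 * ∑ ω : Fin n → Bool, w p ω := by
    simp only [E, mul_sum, ← sum_sub_distrib, ← sum_add_distrib]
    exact sum_congr rfl fun ω _ => by ring
  rw [Var, expand, sum_w]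
  ring

theorem Var_le_of_mem_Icc (hp : p ∈ Set.Icc 0 1) {a b : ℝ} {f : (Fin n → Bool) → ℝ}
    (hf : ∀ ω, f ω ∈ Set.Icc a b) : Var p f ≤ (b - a) ^ 2 := by
  have hE : E p f ∈ Set.Icc a b := E_mem_of_convex hp (convex_Icc a b) hf
  have deviation_sq_le (ω : Fin n → Bool) : (f ω - E p f) ^ 2 ≤ (b - a) ^ 2 :=
    sq_le_sq' (by linarith [(hf ω).1, hE.2]) (by linarith [(hf ω).2, hE.1])
  exact E_mem_of_convex hp (convex_Iic _) deviation_sq_le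

end ProductMeasure

section NoiseSpectrum

variable {n : ℕ} {p : ℝ}

theorem chi_eq_prod_bitChar (p : ℝ) (S : Finset (Fin n)) (ω : Fin n → Bool) :
    chi p S ω = ∏ i ∈ S, bitChar p (ω i) := rfl

theorem fourier_empty (p : ℝ) (f : (Fin n → Bool) → ℝ) : fourier p f ∅ = E p f := by
  simp only [fourier, chi, prod_empty, mul_one]

theorem pairW_zero (p : ℝ) (a b : Fin n → Bool) :
    pairW p 0 a b = if a = b then w p a else 0 := by
  simp [pairW, w, prod_ite_zero, funext_iff]

theorem noiseCov_zero (p : ℝ) (f : (Fin n → Bool) → ℝ) : noiseCov p 0 f = Var p f := by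
  simp [noiseCov, E2, pairW_zero, Var_eq_E_sq_sub_sq_E, E, sq]

/-- The functions `1` and `χ` form an orthonormal basis of `L²` of a single bit; this is the
corresponding resolution of the identity. -/
theorem bitWeight_mul_one_add_bitChar_mul (hp : p ∈ Set.Ioo 0 1) (a b : Bool) :
    bitWeight p b * (1 + bitChar p a * bitChar p b) = if a = b then 1 else 0 := by
  have hp₀ : 0 < p := hp.1
  have hp₁ : 0 < 1 - p := sub_pos.2 hp.2
  have sq_true : √((1 - p) / p) * √((1 - p) / p) = (1 - p) / p :=
    Real.mul_self_sqrt (by positivity)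
  have sq_false : √(p / (1 - p)) * √(p / (1 - p)) = p / (1 - p) :=
    Real.mul_self_sqrt (by positivity)
  have cross : √((1 - p) / p) * √(p / (1 - p)) = 1 := by
    rw [← Real.sqrt_mul (by positivity), div_mul_div_cancel₀ hp₀.ne', div_self hp₁.ne',
      Real.sqrt_one]
  cases a <;> cases b
  · simp only [bitWeight, bitChar, Bool.false_eq_true, if_false, if_true, sq_false]
    field_simp
    ring
  · simp [bitWeight, bitChar, mul_comm √(p / (1 - p)), cross]
  · simp [bitWeight, bitChar, cross]
  · simp only [bitWeight, bitChar, if_true, neg_mul_neg, sq_true]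
    field_simp
    ring

theorem pairW_eq_sum_chi (hp : p ∈ Set.Ioo 0 1) (ε : ℝ) (a b : Fin n → Bool) :
    pairW p ε a b = ∑ S, (1 - ε) ^ S.card * (w p a * chi p S a) * (w p b * chi p S b) := by
  have factor (x y : Bool) :
      bitWeight p x * ((1 - ε) * (if x = y then 1 else 0) + ε * bitWeight p y) =
        bitWeight p x * bitWeight p y * (1 + (1 - ε) * (bitChar p x * bitChar p y)) := by
    rw [← bitWeight_mul_one_add_bitChar_mul hp]
    ring
  calc pairW p ε a b
      = ∏ i, bitWeight p (a i) * bitWeight p (b i) *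
          (1 + (1 - ε) * (bitChar p (a i) * bitChar p (b i))) :=
        prod_congr rfl fun i _ => factor (a i) (b i)
    _ = w p a * w p b * ∑ S, (1 - ε) ^ S.card * (chi p S a * chi p S b) := by
        simp only [prod_mul_distrib, prod_one_add, powerset_univ, prod_const,
          w_eq_prod_bitWeight, chi_eq_prod_bitChar]
    _ = ∑ S, (1 - ε) ^ S.card * (w p a * chi p S a) * (w p b * chi p S b) := by
        rw [mul_sum]
        exact sum_congr rfl fun S _ => by ring

theorem E2_mul_eq_sum_fourier (hp : p ∈ Set.Ioo 0 1) (ε : ℝ) (f g : (Fin n → Bool) → ℝ) :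
    E2 p ε (fun a b => f a * g b) = ∑ S, (1 - ε) ^ S.card * (fourier p f S * fourier p g S) :=
  calc E2 p ε (fun a b => f a * g b)
      = ∑ a, ∑ b, ∑ S, (1 - ε) ^ S.card *
          (w p a * (f a * chi p S a) * (w p b * (g b * chi p S b))) := by
        simp only [E2, pairW_eq_sum_chi hp, sum_mul]
        exact sum_congr rfl fun a _ => sum_congr rfl fun b _ => sum_congr rfl fun S _ => by ring
    _ = ∑ S, (1 - ε) ^ S.card * (fourier p f S * fourier p g S) := by
        simp only [sum_comm_cycle, fourier, E, sum_mul_sum, ← mul_sum]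

theorem noiseCov_eq_sum_fourier_sq (hp : p ∈ Set.Ioo 0 1) (ε : ℝ) (f : (Fin n → Bool) → ℝ) :
    noiseCov p ε f = ∑ S with S ≠ ∅, (1 - ε) ^ S.card * fourier p f S ^ 2 := by
  rw [noiseCov, E2_mul_eq_sum_fourier hp, filter_ne', ← add_sum_erase _ _ (mem_univ ∅),
    fourier_empty]
  simp [sq]

theorem Var_eq_sum_fourier_sq (hp : p ∈ Set.Ioo 0 1) (f : (Fin n → Bool) → ℝ) :
    Var p f = ∑ S with S ≠ ∅, fourier p f S ^ 2 := by
  simpa [noiseCov_zero] using noiseCov_eq_sum_fourier_sq hp 0 f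

theorem lowLevelMass_nonneg (p : ℝ) (k : ℕ) (f : (Fin n → Bool) → ℝ) : 0 ≤ lowLevelMass p k f :=
  sum_nonneg fun _ _ => sq_nonneg _

variable {ε : ℝ}

theorem noiseCov_nonneg (hp : p ∈ Set.Ioo 0 1) (hε : ε ≤ 1) (f : (Fin n → Bool) → ℝ) :
    0 ≤ noiseCov p ε f := by
  have : 0 ≤ 1 - ε := sub_nonneg.2 hε
  rw [noiseCov_eq_sum_fourier_sq hp]
  positivity

theorem pow_mul_lowLevelMass_le_noiseCov (hp : p ∈ Set.Ioo 0 1) (hε : ε ∈ Set.Icc 0 1)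
    (k : ℕ) (f : (Fin n → Bool) → ℝ) : (1 - ε) ^ k * lowLevelMass p k f ≤ noiseCov p ε f := by
  have h₀ : 0 ≤ 1 - ε := sub_nonneg.2 hε.2
  have h₁ : 1 - ε ≤ 1 := sub_le_self 1 hε.1
  rw [noiseCov_eq_sum_fourier_sq hp, lowLevelMass, mul_sum]
  calc ∑ S with S ≠ ∅ ∧ S.card ≤ k, (1 - ε) ^ k * fourier p f S ^ 2
      ≤ ∑ S with S ≠ ∅ ∧ S.card ≤ k, (1 - ε) ^ S.card * fourier p f S ^ 2 :=
        sum_le_sum fun S hS => mul_le_mul_of_nonneg_right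
          (pow_le_pow_of_le_one h₀ h₁ (mem_filter.1 hS).2.2) (sq_nonneg _)
    _ ≤ ∑ S with S ≠ ∅, (1 - ε) ^ S.card * fourier p f S ^ 2 :=
        sum_le_sum_of_subset_of_nonneg (monotone_filter_right _ fun _ _ hS => hS.1)
          fun S _ _ => by positivity

theorem noiseCov_le_lowLevelMass_add (hp : p ∈ Set.Ioo 0 1) (hε : ε ∈ Set.Icc 0 1)
    (k : ℕ) (f : (Fin n → Bool) → ℝ) :
    noiseCov p ε f ≤ lowLevelMass p k f + (1 - ε) ^ k * Var p f := by
  have h₀ : 0 ≤ 1 - ε := sub_nonneg.2 hε.2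
  have h₁ : 1 - ε ≤ 1 := sub_le_self 1 hε.1
  have multiplier_le (S : Finset (Fin n)) :
      (1 - ε) ^ S.card ≤ (if S.card ≤ k then 1 else 0) + (1 - ε) ^ k := by
    split_ifs with hS
    · exact (pow_le_one₀ h₀ h₁).trans (le_add_of_nonneg_right (pow_nonneg h₀ k))
    · simpa using pow_le_pow_of_le_one h₀ h₁ (not_le.1 hS).le
  calc noiseCov p ε f
      ≤ ∑ S with S ≠ ∅, ((if S.card ≤ k then 1 else 0) + (1 - ε) ^ k) * fourier p f S ^ 2 := by
        rw [noiseCov_eq_sum_fourier_sq hp]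
        gcongr with S
        exact multiplier_le S
    _ = lowLevelMass p k f + (1 - ε) ^ k * Var p f := by
        simp only [add_mul, ite_mul, one_mul, zero_mul, sum_add_distrib, ← sum_filter,
          filter_filter, ← mul_sum, lowLevelMass, Var_eq_sum_fourier_sq hp]

end NoiseSpectrum

section Limits

variable {ι : Type*} {l : Filter ι} {m : ι → ℕ} {p ε : ℝ} {f : ∀ i, (Fin (m i) → Bool) → ℝ}

theorem tendsto_lowLevelMass_of_tendsto_noiseCov (hp : p ∈ Set.Ioo 0 1) (hε : ε ∈ Set.Ico 0 1)
    (h : Tendsto (fun i => noiseCov p ε (f i)) l (nhds 0)) (k : ℕ) :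
    Tendsto (fun i => lowLevelMass p k (f i)) l (nhds 0) := by
  have hpow : 0 < (1 - ε) ^ k := pow_pos (sub_pos.2 hε.2) k
  refine squeeze_zero (fun i => lowLevelMass_nonneg p k (f i)) (fun i => ?_)
    (by simpa using h.div_const ((1 - ε) ^ k))
  exact (le_div_iff₀' hpow).2 (pow_mul_lowLevelMass_le_noiseCov hp ⟨hε.1, hε.2.le⟩ k (f i))

theorem tendsto_noiseCov_of_tendsto_lowLevelMass (hp : p ∈ Set.Ioo 0 1) (hε : ε ∈ Set.Ioc 0 1)
    (hVar : l.IsBoundedUnder (· ≤ ·) fun i => Var p (f i))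
    (h : ∀ k, Tendsto (fun i => lowLevelMass p k (f i)) l (nhds 0)) :
    Tendsto (fun i => noiseCov p ε (f i)) l (nhds 0) := by
  obtain ⟨C, hC⟩ := hVar.eventually_le
  have h₀ : 0 ≤ 1 - ε := sub_nonneg.2 hε.2
  have tail_tendsto : Tendsto (fun k : ℕ => (1 - ε) ^ k * C) atTop (nhds 0) := by
    simpa using (tendsto_pow_atTop_nhds_zero_of_lt_one h₀ (sub_lt_self 1 hε.1)).mul_const C
  refine tendsto_order.2 ⟨fun δ hδ => .of_forall fun i =>
    hδ.trans_le (noiseCov_nonneg hp hε.2 (f i)), fun δ hδ => ?_⟩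
  obtain ⟨k, hk⟩ := (tail_tendsto.eventually_lt_const hδ).exists
  filter_upwards [(h k).eventually_lt_const (sub_pos.2 hk), hC] with i hlow hVar_le
  calc noiseCov p ε (f i)
      ≤ lowLevelMass p k (f i) + (1 - ε) ^ k * Var p (f i) :=
        noiseCov_le_lowLevelMass_add hp ⟨hε.1.le, hε.2⟩ k (f i)
    _ ≤ lowLevelMass p k (f i) + (1 - ε) ^ k * C := by gcongr
    _ < δ := by linarith

end Limits

theorem NS_iff_low_level_fourier_vanishes_general {p : ℝ} (hp : p ∈ Set.Ioo 0 1)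
    {f : ∀ n, (Fin n → Bool) → ℝ} (hVar : atTop.IsBoundedUnder (· ≤ ·) fun n => Var p (f n)) :
    NS p f ↔ ∀ k, Tendsto (fun n => lowLevelMass p k (f n)) atTop (nhds 0) := by
  refine ⟨fun h => ?_, fun h ε hε => ?_⟩
  · have half_mem : (1 / 2 : ℝ) ∈ Set.Ioo 0 1 := by norm_num
    exact tendsto_lowLevelMass_of_tendsto_noiseCov hp (Set.Ioo_subset_Ico_self half_mem)
      (h _ half_mem)
  · exact tendsto_noiseCov_of_tendsto_lowLevelMass hp (Set.Ioo_subset_Ioc_self hε) hVar h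

/-- `(f_n)` is NS_p iff for every `k`, the Fourier mass on
non-empty sets of size at most `k` vanishes as `n → ∞`. -/
theorem NS_iff_low_level_fourier_vanishes (p : ℝ) (hp : p ∈ Set.Ioo (0 : ℝ) 1)
    (f : ∀ n, (Fin n → Bool) → ℝ)
    (hf : ∀ n ω, f n ω ∈ Set.Icc (0 : ℝ) 1) :
    NS p f ↔ ∀ k : ℕ,
      Tendsto (fun n =>
        ∑ S ∈ Finset.univ.filter (fun S : Finset (Fin n) => S ≠ ∅ ∧ S.card ≤ k),
          fourier p (f n) S ^ 2) atTop (nhds 0) := by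
  have hVar : atTop.IsBoundedUnder (· ≤ ·) fun n => Var p (f n) := isBoundedUnder_of
    ⟨(1 - 0) ^ 2, fun n => Var_le_of_mem_Icc (Set.Ioo_subset_Icc_self hp) (hf n)⟩
  exact NS_iff_low_level_fourier_vanishes_general hp hVar

end PartialObs
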